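/- Let (CoFib, Fib, Weq) be a closed model structure on an exact category 𝒜, with 𝒞 the class of cofibrant objects and T𝓕 the class of trivially fibrant objects. The following are equivalent: (1) cofibrations are exactly the inflations with cofibrant cokernel and every trivial fibration is a deflation; (2) Ext¹(C,Y)=0 for all C∈𝒞, Y∈T𝓕, every cofibration is an inflation, and every trivial fibration is a deflation; (3) trivial fibrations are exactly the deflations with trivially fibrant kernel and every cofibration is an inflation; (4) cofibrations are exactly the inflations with cofibrant cokernel and trivial fibrations are exactly the deflations with trivially fibrant kernel. If moreover 𝒜 is weakly idempotent complete, these are also equivalent to: (5) (𝒞, T𝓕) is a complete cotorsion pair in 𝒜. -/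

import Mathlib

open CategoryTheory Limits ZeroObject

universe v u

/-- An exact structure (Quillen exact category) on an additive category `𝒜`:
a class of conflations (kernel-cokernel pairs), closed under isomorphisms,
with identities deflations, deflations closed under composition and stable
under pullback, and inflations stable under pushout. -/
structure ExactStructure (𝒜 : Type u) [Category.{v} 𝒜] [Preadditive 𝒜]
    [HasZeroObject 𝒜] [HasBinaryBiproducts 𝒜] : Type (max u v) where
  conflation : ∀ ⦃X Y Z : 𝒜⦄, (X ⟶ Y) → (Y ⟶ Z) → Prop
  comp_zero : ∀ {X Y Z : 𝒜} {i : X ⟶ Y} {d : Y ⟶ Z}, conflation i d → i ≫ d = 0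
  isKernel : ∀ {X Y Z : 𝒜} {i : X ⟶ Y} {d : Y ⟶ Z} (h : conflation i d),
    Nonempty (IsLimit (KernelFork.ofι i (comp_zero h)))
  isCokernel : ∀ {X Y Z : 𝒜} {i : X ⟶ Y} {d : Y ⟶ Z} (h : conflation i d),
    Nonempty (IsColimit (CokernelCofork.ofπ d (comp_zero h)))
  conflation_iso : ∀ {X Y Z X' Y' Z' : 𝒜} {i : X ⟶ Y} {d : Y ⟶ Z}
    (eX : X ≅ X') (eY : Y ≅ Y') (eZ : Z ≅ Z') {i' : X' ⟶ Y'} {d' : Y' ⟶ Z'},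
    conflation i d → i ≫ eY.hom = eX.hom ≫ i' → d ≫ eZ.hom = eY.hom ≫ d' →
    conflation i' d'
  id_deflation : ∀ X : 𝒜, conflation (0 : (0 : 𝒜) ⟶ X) (𝟙 X)
  deflation_comp : ∀ {X Y Z X' W : 𝒜} {i : X ⟶ Y} {d : Y ⟶ Z} {i' : X' ⟶ Z} {d' : Z ⟶ W},
    conflation i d → conflation i' d' → ∃ (K : 𝒜) (k : K ⟶ Y), conflation k (d ≫ d')
  pullback_deflation : ∀ {X Y Z Z' : 𝒜} {i : X ⟶ Y} {d : Y ⟶ Z},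
    conflation i d → ∀ (f : Z' ⟶ Z),
    ∃ (Y' : 𝒜) (f' : Y' ⟶ Y) (d' : Y' ⟶ Z') (K : 𝒜) (k : K ⟶ Y'),
      IsPullback f' d' d f ∧ conflation k d'
  pushout_inflation : ∀ {X Y Z X' : 𝒜} {i : X ⟶ Y} {d : Y ⟶ Z},
    conflation i d → ∀ (f : X ⟶ X'),
    ∃ (Y' : 𝒜) (f' : Y ⟶ Y') (i' : X' ⟶ Y') (Q : 𝒜) (q : Y' ⟶ Q),
      IsPushout i f f' i' ∧ conflation i' q

variable {𝒜 : Type u} [Category.{v} 𝒜] [Preadditive 𝒜] [HasZeroObject 𝒜]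
  [HasBinaryBiproducts 𝒜]

/-- `f` is an inflation: the first map of some conflation. -/
def IsInflation (E : ExactStructure 𝒜) {X Y : 𝒜} (i : X ⟶ Y) : Prop :=
  ∃ (Z : 𝒜) (d : Y ⟶ Z), E.conflation i d

/-- `f` is a deflation: the second map of some conflation. -/
def IsDeflation (E : ExactStructure 𝒜) {Y Z : 𝒜} (d : Y ⟶ Z) : Prop :=
  ∃ (X : 𝒜) (i : X ⟶ Y), E.conflation i d

/-- `𝒜` is weakly idempotent complete: every split epimorphism is a deflation. -/
def IsWIC (E : ExactStructure 𝒜) : Prop :=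
  ∀ {X Y : 𝒜} (d : X ⟶ Y) (s : Y ⟶ X), s ≫ d = 𝟙 Y → IsDeflation E d

/-- `Ext¹(A,B) = 0`: every conflation `B ⟶ M ⟶ A` splits. -/
def Ext1IsZero (E : ExactStructure 𝒜) (A B : 𝒜) : Prop :=
  ∀ {M : 𝒜} (i : B ⟶ M) (d : M ⟶ A), E.conflation i d → ∃ r : M ⟶ B, i ≫ r = 𝟙 B

/-- `(X, Y)` is a cotorsion pair: each class is the `Ext¹`-orthogonal of the other. -/
def IsCotorsionPair (E : ExactStructure 𝒜) (X Y : Set 𝒜) : Prop :=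
  (∀ A : 𝒜, A ∈ X ↔ ∀ B ∈ Y, Ext1IsZero E A B) ∧
  (∀ B : 𝒜, B ∈ Y ↔ ∀ A ∈ X, Ext1IsZero E A B)

/-- Completeness of a cotorsion pair: every object has approximation sequences. -/
def IsCompleteCP (E : ExactStructure 𝒜) (X Y : Set 𝒜) : Prop :=
  ∀ A : 𝒜,
    (∃ (Y₀ X₀ : 𝒜) (i : Y₀ ⟶ X₀) (d : X₀ ⟶ A), E.conflation i d ∧ X₀ ∈ X ∧ Y₀ ∈ Y) ∧
    (∃ (Y₁ X₁ : 𝒜) (i : A ⟶ Y₁) (d : Y₁ ⟶ X₁), E.conflation i d ∧ X₁ ∈ X ∧ Y₁ ∈ Y)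

/-- Heredity of a cotorsion pair: `X` is closed under kernels of deflations and
`Y` is closed under cokernels of inflations. -/
def IsHereditaryCP (E : ExactStructure 𝒜) (X Y : Set 𝒜) : Prop :=
  (∀ {K A B : 𝒜} (i : K ⟶ A) (d : A ⟶ B), E.conflation i d → A ∈ X → B ∈ X → K ∈ X) ∧
  (∀ {K A B : 𝒜} (i : K ⟶ A) (d : A ⟶ B), E.conflation i d → K ∈ Y → A ∈ Y → B ∈ Y)

/-- `t : W ⟶ B` is a right `ω`-approximation of `B`. -/
def IsRightApprox (ω : Set 𝒜) {W B : 𝒜} (t : W ⟶ B) : Prop :=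
  W ∈ ω ∧ ∀ (W' : 𝒜), W' ∈ ω → ∀ g : W' ⟶ B, ∃ h : W' ⟶ W, h ≫ t = g

/-- `ω` is contravariantly finite: every object has a right `ω`-approximation. -/
def IsContravariantlyFinite (ω : Set 𝒜) : Prop :=
  ∀ B : 𝒜, ∃ (W : 𝒜) (t : W ⟶ B), IsRightApprox ω t

/-- A full additive subcategory closed under isomorphisms and direct summands,
viewed as a class of objects. -/
def AdditivelyClosed (S : Set 𝒜) : Prop :=
  (0 : 𝒜) ∈ S ∧ (∀ A B : 𝒜, A ∈ S → B ∈ S → (A ⊞ B) ∈ S) ∧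
  (∀ {A B : 𝒜}, (A ≅ B) → A ∈ S → B ∈ S) ∧
  (∀ {A B : 𝒜} (i : A ⟶ B) (r : B ⟶ A), i ≫ r = 𝟙 A → B ∈ S → A ∈ S)

/-- `CoFib_ω`: inflations with cokernel in `X`. -/
def CoFibO (E : ExactStructure 𝒜) (X : Set 𝒜) : MorphismProperty 𝒜 :=
  fun _ B f => ∃ (Z : 𝒜) (d : B ⟶ Z), E.conflation f d ∧ Z ∈ X

/-- `Fib_ω`: the `ω`-epic morphisms. -/
def FibO (ω : Set 𝒜) : MorphismProperty 𝒜 :=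
  fun A B f => ∀ (W : 𝒜), W ∈ ω → ∀ g : W ⟶ B, ∃ h : W ⟶ A, h ≫ f = g

/-- `Weq_ω`: morphisms `f : A ⟶ B` such that for some `W ∈ ω` and `t : W ⟶ B`,
`(f,t) : A ⊞ W ⟶ B` is a deflation with kernel in `Y`. -/
def WeqO (E : ExactStructure 𝒜) (ω Y : Set 𝒜) : MorphismProperty 𝒜 :=
  fun A B f => ∃ (W : 𝒜) (_ : W ∈ ω) (t : W ⟶ B) (K : 𝒜) (k : K ⟶ A ⊞ W),
    E.conflation k (biprod.desc f t) ∧ K ∈ Y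

/-- `TCoFib_ω`: split monomorphisms with cokernel in `ω`. -/
def TCoFibO (E : ExactStructure 𝒜) (ω : Set 𝒜) : MorphismProperty 𝒜 :=
  fun A B f => (∃ r : B ⟶ A, f ≫ r = 𝟙 A) ∧
    ∃ (Z : 𝒜) (d : B ⟶ Z), E.conflation f d ∧ Z ∈ ω

/-- `TFib_ω`: deflations with kernel in `Y`. -/
def TFibO (E : ExactStructure 𝒜) (Y : Set 𝒜) : MorphismProperty 𝒜 :=
  fun A _ f => ∃ (K : 𝒜) (k : K ⟶ A), E.conflation k f ∧ K ∈ Y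

/-- `g` is a retract of `f`. -/
def IsRetractMor {A' B' A B : 𝒜} (g : A' ⟶ B') (f : A ⟶ B) : Prop :=
  ∃ (φ₁ : A' ⟶ A) (ψ₁ : A ⟶ A') (φ₂ : B' ⟶ B) (ψ₂ : B ⟶ B'),
    φ₁ ≫ ψ₁ = 𝟙 A' ∧ φ₂ ≫ ψ₂ = 𝟙 B' ∧ φ₁ ≫ f = g ≫ φ₂ ∧ f ≫ ψ₂ = ψ₁ ≫ g

/-- A (closed, Quillen) model structure, given by classes of cofibrations,
fibrations and weak equivalences. -/
structure IsModelStructure (C F W : MorphismProperty 𝒜) : Prop where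
  weq_comp : ∀ {X Y Z : 𝒜} (f : X ⟶ Y) (g : Y ⟶ Z), W f → W g → W (f ≫ g)
  weq_cancel_left : ∀ {X Y Z : 𝒜} (f : X ⟶ Y) (g : Y ⟶ Z), W f → W (f ≫ g) → W g
  weq_cancel_right : ∀ {X Y Z : 𝒜} (f : X ⟶ Y) (g : Y ⟶ Z), W g → W (f ≫ g) → W f
  retract_cofib : ∀ {A' B' A B : 𝒜} (g : A' ⟶ B') (f : A ⟶ B),
    IsRetractMor g f → C f → C g
  retract_fib : ∀ {A' B' A B : 𝒜} (g : A' ⟶ B') (f : A ⟶ B),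
    IsRetractMor g f → F f → F g
  retract_weq : ∀ {A' B' A B : 𝒜} (g : A' ⟶ B') (f : A ⟶ B),
    IsRetractMor g f → W f → W g
  lifting_left : ∀ {A B X Y : 𝒜} (i : A ⟶ B) (p : X ⟶ Y) (a : A ⟶ X) (b : B ⟶ Y),
    C i → W i → F p → a ≫ p = i ≫ b → ∃ s : B ⟶ X, i ≫ s = a ∧ s ≫ p = b
  lifting_right : ∀ {A B X Y : 𝒜} (i : A ⟶ B) (p : X ⟶ Y) (a : A ⟶ X) (b : B ⟶ Y),
    C i → F p → W p → a ≫ p = i ≫ b → ∃ s : B ⟶ X, i ≫ s = a ∧ s ≫ p = b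
  fact_left : ∀ {A B : 𝒜} (f : A ⟶ B), ∃ (Z : 𝒜) (i : A ⟶ Z) (p : Z ⟶ B),
    i ≫ p = f ∧ C i ∧ W i ∧ F p
  fact_right : ∀ {A B : 𝒜} (f : A ⟶ B), ∃ (Z : 𝒜) (j : A ⟶ Z) (q : Z ⟶ B),
    j ≫ q = f ∧ C j ∧ F q ∧ W q

/-- An object is cofibrant if `0 ⟶ X` is a cofibration. -/
def Cofibrant (C : MorphismProperty 𝒜) (A : 𝒜) : Prop := C (0 : (0 : 𝒜) ⟶ A)

/-- An object is fibrant if `X ⟶ 0` is a fibration. -/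
def Fibrant (F : MorphismProperty 𝒜) (A : 𝒜) : Prop := F (0 : A ⟶ (0 : 𝒜))

/-- An object is trivial if `0 ⟶ X` is a weak equivalence. -/
def TrivialObj (W : MorphismProperty 𝒜) (A : 𝒜) : Prop := W (0 : (0 : 𝒜) ⟶ A)

/-- `P` is projective in the exact category. -/
def IsProjObj (E : ExactStructure 𝒜) (P : 𝒜) : Prop :=
  ∀ {A B : 𝒜} (d : A ⟶ B), IsDeflation E d → ∀ g : P ⟶ B, ∃ h : P ⟶ A, h ≫ d = g

/-- The exact category has enough projective objects. -/
def HasEnoughProj (E : ExactStructure 𝒜) : Prop :=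
  ∀ X : 𝒜, ∃ (P : 𝒜) (d : P ⟶ X), IsProjObj E P ∧ IsDeflation E d

/-- Cofibrations are exactly the inflations with cofibrant cokernel. -/
def CofibsAreInflWithCofibCoker (E : ExactStructure 𝒜) (C : MorphismProperty 𝒜) : Prop :=
  ∀ {A B : 𝒜} (f : A ⟶ B),
    C f ↔ ∃ (Z : 𝒜) (d : B ⟶ Z), E.conflation f d ∧ Cofibrant C Z

/-- Fibrations are exactly the deflations with fibrant kernel. -/
def FibsAreDeflWithFibKer (E : ExactStructure 𝒜) (F : MorphismProperty 𝒜) : Prop :=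
  ∀ {A B : 𝒜} (f : A ⟶ B),
    F f ↔ ∃ (K : 𝒜) (k : K ⟶ A), E.conflation k f ∧ Fibrant F K

/-- Trivial fibrations are exactly the deflations with trivially fibrant kernel. -/
def TrivFibsAreDeflWithTrivFibKer (E : ExactStructure 𝒜)
    (F W : MorphismProperty 𝒜) : Prop :=
  ∀ {A B : 𝒜} (f : A ⟶ B),
    (F f ∧ W f) ↔ ∃ (K : 𝒜) (k : K ⟶ A), E.conflation k f ∧ Fibrant F K ∧ TrivialObj W K

/-- Every cofibration is an inflation. -/
def CofibsAreInfl (E : ExactStructure 𝒜) (C : MorphismProperty 𝒜) : Prop :=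
  ∀ {A B : 𝒜} (f : A ⟶ B), C f → IsInflation E f

/-- Every trivial fibration is a deflation. -/
def TrivFibsAreDefl (E : ExactStructure 𝒜) (F W : MorphismProperty 𝒜) : Prop :=
  ∀ {A B : 𝒜} (f : A ⟶ B), F f → W f → IsDeflation E f

/-- An exact model structure in the sense of Gillespie. -/
def IsExactModelStr (E : ExactStructure 𝒜) (C F W : MorphismProperty 𝒜) : Prop :=
  IsModelStructure C F W ∧ CofibsAreInflWithCofibCoker E C ∧ FibsAreDeflWithFibKer E F

/-- A weakly projective model structure: every object is fibrant, cofibrations are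
exactly the inflations with cofibrant cokernel, and trivial fibrations are exactly
the deflations with trivially fibrant kernel. -/
def IsWeaklyProjModelStr (E : ExactStructure 𝒜) (C F W : MorphismProperty 𝒜) : Prop :=
  IsModelStructure C F W ∧ (∀ A : 𝒜, Fibrant F A) ∧
    CofibsAreInflWithCofibCoker E C ∧ TrivFibsAreDeflWithTrivFibKer E F W

/-- A projective model structure: an exact model structure with every object fibrant. -/
def IsProjectiveModelStr (E : ExactStructure 𝒜) (C F W : MorphismProperty 𝒜) : Prop :=
  IsExactModelStr E C F W ∧ (∀ A : 𝒜, Fibrant F A)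

/-- A class of objects is thick: closed under direct summands and two-out-of-three
in conflations. -/
def IsThick (E : ExactStructure 𝒜) (S : Set 𝒜) : Prop :=
  (∀ {A B : 𝒜} (i : A ⟶ B) (r : B ⟶ A), i ≫ r = 𝟙 A → B ∈ S → A ∈ S) ∧
  (∀ {X Y Z : 𝒜} (i : X ⟶ Y) (d : Y ⟶ Z), E.conflation i d →
    ((X ∈ S → Y ∈ S → Z ∈ S) ∧ (X ∈ S → Z ∈ S → Y ∈ S) ∧ (Y ∈ S → Z ∈ S → X ∈ S)))

/-!
Only the weak factorization system `(L, R) = (C, F ⊓ W)` of cofibrations and trivial fibrations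
matters. Its two classes are determined by lifting, and `Ext¹(Z, K) = 0` is precisely what lets an
inflation with cokernel `Z` lift against a deflation with kernel `K`: a lifting problem pulls back
to extending a partial section of the deflation along the inflation, and the obstruction lies in
`Ext¹(Z, K)`. Conversely, if `(𝒞, T𝓕)` is complete, the inflation `A ⟶ Y` of an approximation
sequence extends along every map of `L` out of `A`, so that this map is an inflation by cancellation
in a weakly idempotent complete category; dually for `R`.
-/

namespace ExactStructure.conflation

variable {E : ExactStructure 𝒜} {X Y Z : 𝒜} {i : X ⟶ Y} {d : Y ⟶ Z}

theorem mono (h : E.conflation i d) : Mono i :=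
  mono_of_isLimit_fork (E.isKernel h).some

theorem epi (h : E.conflation i d) : Epi d :=
  epi_of_isColimit_cofork (E.isCokernel h).some

theorem exists_lift (h : E.conflation i d) {T : 𝒜} (x : T ⟶ Y) (hx : x ≫ d = 0) :
    ∃ y : T ⟶ X, y ≫ i = x :=
  ⟨_, (KernelFork.IsLimit.lift' (E.isKernel h).some x hx).2⟩

theorem exists_desc (h : E.conflation i d) {T : 𝒜} (x : Y ⟶ T) (hx : i ≫ x = 0) :
    ∃ y : Z ⟶ T, d ≫ y = x :=
  ⟨_, (CokernelCofork.IsColimit.desc' (E.isCokernel h).some x hx).2⟩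

theorem isPullback (h : E.conflation i d) : IsPullback i (0 : X ⟶ 0) d (0 : 0 ⟶ Z) := by
  have := h.mono
  refine .mk' (by simp [E.comp_zero h]) (fun _ _ _ hi _ => (cancel_mono i).1 hi) fun T a b w => ?_
  obtain ⟨l, hl⟩ := h.exists_lift a (by simpa using w)
  exact ⟨l, hl, (isZero_zero 𝒜).eq_of_tgt _ _⟩

theorem isPushout (h : E.conflation i d) : IsPushout i (0 : X ⟶ 0) d (0 : 0 ⟶ Z) := by
  have := h.epi
  refine .mk' (by simp [E.comp_zero h]) (fun _ _ _ hd _ => (cancel_epi d).1 hd) fun T a b w => ?_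
  obtain ⟨l, hl⟩ := h.exists_desc a (by simpa using w)
  exact ⟨l, hl, (isZero_zero 𝒜).eq_of_src _ _⟩

theorem _root_.IsDeflation.conflation_of_isPullback (hd : IsDeflation E d)
    (sq : IsPullback i (0 : X ⟶ 0) d (0 : 0 ⟶ Z)) : E.conflation i d := by
  obtain ⟨K, k, hk⟩ := hd
  exact E.conflation_iso (hk.isPullback.isoIsPullback _ _ sq) (Iso.refl _) (Iso.refl _) hk
    (by simp) (by simp)

theorem _root_.IsInflation.conflation_of_isPushout (hi : IsInflation E i)
    (sq : IsPushout i (0 : X ⟶ 0) d (0 : 0 ⟶ Z)) : E.conflation i d := by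
  obtain ⟨Q, q, hq⟩ := hi
  exact E.conflation_iso (Iso.refl _) (Iso.refl _) (hq.isPushout.isoIsPushout _ _ sq) hq
    (by simp) (by simp)

theorem iso_middle (h : E.conflation i d) {Y' : 𝒜} (e : Y ≅ Y') :
    E.conflation (i ≫ e.hom) (e.inv ≫ d) :=
  E.conflation_iso (Iso.refl _) e (Iso.refl _) h (by simp) (by simp)

theorem of_isPullback (h : E.conflation i d) {Y' Z' : 𝒜} {f' : Y' ⟶ Y} {d' : Y' ⟶ Z'}
    {f : Z' ⟶ Z} (sq : IsPullback f' d' d f) {i' : X ⟶ Y'} (hf : i' ≫ f' = i) (hd : i' ≫ d' = 0) :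
    E.conflation i' d' := by
  obtain ⟨Y'', f'', d'', K, k, sq', hk⟩ := E.pullback_deflation h f
  have hd' : IsDeflation E d' :=
    ⟨K, _, by simpa using hk.iso_middle (sq'.isoIsPullback _ _ sq)⟩
  refine hd'.conflation_of_isPullback (.of_right ?_ (by simp [hd]) sq)
  simpa [hf] using h.isPullback

theorem of_isPushout (h : E.conflation i d) {X' Y' : 𝒜} {f : X ⟶ X'} {f' : Y ⟶ Y'}
    {i' : X' ⟶ Y'} (sq : IsPushout i f f' i') {d' : Y' ⟶ Z} (hf : f' ≫ d' = d) (hi : i' ≫ d' = 0) :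
    E.conflation i' d' := by
  obtain ⟨Y'', f'', i'', Q, q, sq', hq⟩ := E.pushout_inflation h f
  have hi' : IsInflation E i' :=
    ⟨Q, _, by simpa using hq.iso_middle (sq'.isoIsPushout _ _ sq)⟩
  refine hi'.conflation_of_isPushout (.of_top ?_ (by simp [hi]) sq)
  simpa [hf] using h.isPushout

theorem exists_isPullback (h : E.conflation i d) {Z' : 𝒜} (f : Z' ⟶ Z) :
    ∃ (Y' : 𝒜) (f' : Y' ⟶ Y) (d' : Y' ⟶ Z') (i' : X ⟶ Y'),
      IsPullback f' d' d f ∧ i' ≫ f' = i ∧ E.conflation i' d' := by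
  obtain ⟨Y', f', d', -, -, sq, -⟩ := E.pullback_deflation h f
  have w : i ≫ d = 0 ≫ f := by simp [E.comp_zero h]
  exact ⟨Y', f', d', sq.lift i 0 w, sq, sq.lift_fst .., h.of_isPullback sq (by simp) (by simp)⟩

theorem exists_isPushout (h : E.conflation i d) {X' : 𝒜} (f : X ⟶ X') :
    ∃ (Y' : 𝒜) (f' : Y ⟶ Y') (i' : X' ⟶ Y') (d' : Y' ⟶ Z),
      IsPushout i f f' i' ∧ f' ≫ d' = d ∧ E.conflation i' d' := by
  obtain ⟨Y', f', i', -, -, sq, -⟩ := E.pushout_inflation h f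
  have w : i ≫ d = f ≫ 0 := by simp [E.comp_zero h]
  exact ⟨Y', f', i', sq.desc d 0 w, sq, sq.inl_desc .., h.of_isPushout sq (by simp) (by simp)⟩

theorem exists_biprod_iso_of_section (h : E.conflation i d) {s : Z ⟶ Y} (hs : s ≫ d = 𝟙 Z) :
    ∃ e : Z ⊞ X ≅ Y, biprod.inl ≫ e.hom = s ∧ biprod.inr ≫ e.hom = i ∧
      e.hom ≫ d = biprod.fst := by
  have := h.mono
  have hid := E.comp_zero h
  obtain ⟨r, hr⟩ := h.exists_lift (𝟙 Y - d ≫ s) (by simp [hs])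
  have hir : i ≫ r = 𝟙 X := by simp [← cancel_mono i, hr, reassoc_of% hid]
  have hsr : s ≫ r = 0 := by simp [← cancel_mono i, hr, reassoc_of% hs]
  refine ⟨⟨biprod.desc s i, biprod.lift d r, ?_, by simp [hr]⟩, by simp, by simp, ?_⟩ <;>
    ext <;> simp [hs, hid, hir, hsr]

end ExactStructure.conflation

namespace ExactStructure

variable {E : ExactStructure 𝒜}

theorem conflation_id_zero (E : ExactStructure 𝒜) (B : 𝒜) :
    E.conflation (𝟙 B) (0 : B ⟶ (0 : 𝒜)) :=
  (E.id_deflation 0).of_isPushout (IsPushout.zero_left B).flip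
    ((isZero_zero 𝒜).eq_of_src _ _) Limits.comp_zero

theorem isPushout_of_conflation_biprod {A X Y B : 𝒜} {f : A ⟶ X} {g : A ⟶ Y} {f' : X ⟶ B}
    {g' : Y ⟶ B} (h : E.conflation (biprod.lift f g) (biprod.desc f' g')) :
    IsPushout f (-g) f' g' := by
  have := h.epi
  have w : f ≫ f' + g ≫ g' = 0 := by simpa using E.comp_zero h
  refine .mk' (by simpa [eq_neg_iff_add_eq_zero] using w) (fun T φ ψ hf hg => ?_)
    fun T a b hab => ?_
  · rw [← cancel_epi (biprod.desc f' g')]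
    ext <;> simp [hf, hg]
  · obtain ⟨l, hl⟩ := h.exists_desc (biprod.desc a b) (by simp [hab])
    exact ⟨l, by simpa using congr(biprod.inl ≫ $hl), by simpa using congr(biprod.inr ≫ $hl)⟩

theorem isPullback_of_conflation_biprod {A X Y B : 𝒜} {f : A ⟶ X} {g : A ⟶ Y} {f' : X ⟶ B}
    {g' : Y ⟶ B} (h : E.conflation (biprod.lift f g) (biprod.desc f' g')) :
    IsPullback f g f' (-g') := by
  have := h.mono
  have w : f ≫ f' + g ≫ g' = 0 := by simpa using E.comp_zero h
  refine .mk' (by simpa [eq_neg_iff_add_eq_zero] using w) (fun T φ ψ hf hg => ?_)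
    fun T a b hab => ?_
  · rw [← cancel_mono (biprod.lift f g)]
    ext <;> simp [hf, hg]
  · obtain ⟨l, hl⟩ := h.exists_lift (biprod.lift a b) (by simp [hab])
    exact ⟨l, by simpa using congr($hl ≫ biprod.fst), by simpa using congr($hl ≫ biprod.snd)⟩

end ExactStructure

section Cancellation

variable {E : ExactStructure 𝒜} {X Y Z : 𝒜} {f : X ⟶ Y} {g : Y ⟶ Z}

theorem IsWIC.exists_biprod_iso (hE : IsWIC E) {d : Y ⟶ Z} {s : Z ⟶ Y} (hs : s ≫ d = 𝟙 Z) :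
    ∃ (K : 𝒜) (e : Z ⊞ K ≅ Y), biprod.inl ≫ e.hom = s ∧ e.hom ≫ d = biprod.fst := by
  obtain ⟨K, k, hk⟩ := hE d s hs
  obtain ⟨e, hes, -, hed⟩ := hk.exists_biprod_iso_of_section hs
  exact ⟨K, e, hes, hed⟩

/- The pullback of `f ≫ g` along `g` is a biproduct `X ⊞ K`, and the resulting conflation
exhibits `K ⟶ Y` as the pushout of the kernel of `f ≫ g`. -/
theorem IsDeflation.of_comp (hE : IsWIC E) (h : IsDeflation E (f ≫ g)) : IsDeflation E g := by
  obtain ⟨L, l, hl⟩ := h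
  obtain ⟨P, fst, snd, l', sq, hfst, hl'⟩ := hl.exists_isPullback g
  have hσ : sq.lift (𝟙 X) f (by simp) ≫ fst = 𝟙 X := sq.lift_fst ..
  obtain ⟨K, e, hinl, he⟩ := hE.exists_biprod_iso hσ
  have hefst : e.inv ≫ biprod.fst = fst := by simp [← he]
  have hf : biprod.inl ≫ e.hom ≫ snd = f := by simp [reassoc_of% hinl]
  have hconf : E.conflation (biprod.lift l (l' ≫ e.inv ≫ biprod.snd))
      (biprod.desc f (biprod.inr ≫ e.hom ≫ snd)) := by
    convert hl'.iso_middle e.symm using 1 <;> ext <;> simp [hefst, hfst, hf]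
  have hkg : (biprod.inr ≫ e.hom ≫ snd) ≫ g = 0 := by simp [← sq.w, reassoc_of% he]
  exact ⟨K, _, hl.of_isPushout (ExactStructure.isPushout_of_conflation_biprod hconf) rfl hkg⟩

theorem IsInflation.of_comp (hE : IsWIC E) (h : IsInflation E (f ≫ g)) : IsInflation E f := by
  obtain ⟨Q, q, hq⟩ := h
  obtain ⟨P, inl, inr, q', sq, hinl, hq'⟩ := hq.exists_isPushout f
  have hρ : inl ≫ sq.desc (𝟙 Z) g (by simp) = 𝟙 Z := sq.inl_desc ..
  obtain ⟨K, e, he, hefst⟩ := hE.exists_biprod_iso hρ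
  have hg : inr ≫ e.inv ≫ biprod.fst = g := by simp [← hefst]
  have hinl' : inl ≫ e.inv = biprod.inl := by simp [← he]
  have hconf : E.conflation (biprod.lift g (inr ≫ e.inv ≫ biprod.snd))
      (biprod.desc q (biprod.inr ≫ e.hom ≫ q')) := by
    convert hq'.iso_middle e.symm using 1 <;> ext <;> simp [hg, reassoc_of% he, hinl]
  have hfk : f ≫ inr ≫ e.inv ≫ biprod.snd = 0 := by simp [← sq.w_assoc, reassoc_of% hinl']
  exact ⟨K, _, hq.of_isPullback (ExactStructure.isPullback_of_conflation_biprod hconf) rfl hfk⟩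

end Cancellation

section Lifting

variable {E : ExactStructure 𝒜} {A B Z K X Y : 𝒜}

theorem ExactStructure.conflation.exists_retraction_of_section {i : K ⟶ X} {d : X ⟶ Z}
    (h : E.conflation i d) {s : Z ⟶ X} (hs : s ≫ d = 𝟙 Z) : ∃ r : X ⟶ K, i ≫ r = 𝟙 K := by
  obtain ⟨e, -, rfl, -⟩ := h.exists_biprod_iso_of_section hs
  exact ⟨e.inv ≫ biprod.snd, by simp⟩

theorem Ext1IsZero.exists_extension (hZK : Ext1IsZero E Z K) {f : A ⟶ B} {d : B ⟶ Z}
    (hf : E.conflation f d) (a : A ⟶ K) : ∃ b : B ⟶ K, f ≫ b = a := by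
  obtain ⟨P, b, i, q, sq, -, hi⟩ := hf.exists_isPushout a
  obtain ⟨r, hr⟩ := hZK i q hi
  exact ⟨b ≫ r, by rw [sq.w_assoc, hr, Category.comp_id]⟩

theorem ExactStructure.conflation.biprod_desc {f : A ⟶ B} {d : B ⟶ Z} (hf : E.conflation f d)
    {k : K ⟶ X} {p : X ⟶ B} (hk : E.conflation k p) {a : A ⟶ X} (ha : a ≫ p = f) :
    E.conflation (biprod.desc a k) (p ≫ d) := by
  obtain ⟨P, fst, snd, k', sq, hk'fst, hk'⟩ := hk.exists_isPullback f
  have hσ : sq.lift a (𝟙 A) (by simp [ha]) ≫ snd = 𝟙 A := sq.lift_snd ..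
  obtain ⟨e, hinl, hinr, hsnd⟩ := hk'.exists_biprod_iso_of_section hσ
  have hfst : e.hom ≫ fst = biprod.desc a k := by
    ext <;> simp [reassoc_of% hinl, reassoc_of% hinr, hk'fst]
  have sq' : IsPullback (biprod.desc a k) biprod.fst p f :=
    sq.of_iso' e (Iso.refl _) (Iso.refl _) (Iso.refl _) (by simp [hfst]) (by simp [hsnd])
      (by simp) (by simp)
  exact IsDeflation.conflation_of_isPullback (E.deflation_comp hk hf)
    (by simpa using sq'.paste_vert hf.isPullback)

theorem Ext1IsZero.exists_section (hZK : Ext1IsZero E Z K) {f : A ⟶ B} {d : B ⟶ Z}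
    (hf : E.conflation f d) {k : K ⟶ X} {p : X ⟶ B} (hk : E.conflation k p) {a : A ⟶ X}
    (ha : a ≫ p = f) : ∃ s : B ⟶ X, f ≫ s = a ∧ s ≫ p = 𝟙 B := by
  have := hk.epi
  obtain ⟨r, hr⟩ := hZK.exists_extension (hf.biprod_desc hk ha) biprod.snd
  have har : a ≫ r = 0 := by simpa using congr(biprod.inl ≫ $hr)
  have hkr : k ≫ r = 𝟙 K := by simpa using congr(biprod.inr ≫ $hr)
  obtain ⟨s, hs⟩ := hk.exists_desc (𝟙 X - r ≫ k) (by simp [reassoc_of% hkr])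
  refine ⟨s, ?_, ?_⟩
  · simp [← ha, hs, reassoc_of% har]
  · simp [← cancel_epi p, reassoc_of% hs, E.comp_zero hk]

theorem Ext1IsZero.hasLiftingProperty (hZK : Ext1IsZero E Z K) {f : A ⟶ B} {d : B ⟶ Z}
    (hf : E.conflation f d) {k : K ⟶ X} {p : X ⟶ Y} (hk : E.conflation k p) :
    HasLiftingProperty f p where
  sq_hasLift {a b} w := by
    obtain ⟨P, fst, snd, k', sq, -, hk'⟩ := hk.exists_isPullback b
    obtain ⟨s, hfs, hs⟩ := hZK.exists_section hf hk' (sq.lift_snd a f w.w)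
    exact ⟨⟨⟨s ≫ fst, by simp [reassoc_of% hfs], by simp [sq.w, reassoc_of% hs]⟩⟩⟩

end Lifting

/-- The class `R` consists of deflations. It plays the role of the trivial fibrations when `R` is
the right class of a weak factorization system. -/
def FibsAreDefl (E : ExactStructure 𝒜) (R : MorphismProperty 𝒜) : Prop :=
  ∀ {A B : 𝒜} (f : A ⟶ B), R f → IsDeflation E f

theorem CofibsAreInflWithCofibCoker.cofibsAreInfl {E : ExactStructure 𝒜} {L : MorphismProperty 𝒜}
    (h : CofibsAreInflWithCofibCoker E L) : CofibsAreInfl E L := fun f hf =>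
  let ⟨Z, d, hd, _⟩ := (h f).1 hf
  ⟨Z, d, hd⟩

theorem FibsAreDeflWithFibKer.fibsAreDefl {E : ExactStructure 𝒜} {R : MorphismProperty 𝒜}
    (h : FibsAreDeflWithFibKer E R) : FibsAreDefl E R := fun f hf =>
  let ⟨K, k, hk, _⟩ := (h f).1 hf
  ⟨K, k, hk⟩

section WeakFactorizationSystem

open MorphismProperty

theorem isStableUnderBaseChange_of_wfs {𝒞 : Type*} [Category* 𝒞] (L R : MorphismProperty 𝒞)
    [IsWeakFactorizationSystem L R] : R.IsStableUnderBaseChange :=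
  rlp_eq_of_wfs L R ▸ rlp_isStableUnderBaseChange L

theorem isStableUnderCobaseChange_of_wfs {𝒞 : Type*} [Category* 𝒞] (L R : MorphismProperty 𝒞)
    [IsWeakFactorizationSystem L R] : L.IsStableUnderCobaseChange :=
  llp_eq_of_wfs L R ▸ llp_isStableUnderCobaseChange R

variable {E : ExactStructure 𝒜} {L R : MorphismProperty 𝒜}

theorem Fibrant.of_conflation [R.IsStableUnderBaseChange] {K X Y : 𝒜} {k : K ⟶ X} {p : X ⟶ Y}
    (h : E.conflation k p) (hp : R p) : Fibrant R K :=
  R.of_isPullback h.isPullback hp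

theorem Cofibrant.of_conflation [L.IsStableUnderCobaseChange] {A B Z : 𝒜} {i : A ⟶ B} {d : B ⟶ Z}
    (h : E.conflation i d) (hi : L i) : Cofibrant L Z :=
  L.of_isPushout h.isPushout.flip hi

variable [IsWeakFactorizationSystem L R]

omit [HasBinaryBiproducts 𝒜] in
theorem Fibrant.exists_extension {A B Y : 𝒜} (hY : Fibrant R Y) {i : A ⟶ B} (hi : L i)
    (a : A ⟶ Y) : ∃ b : B ⟶ Y, i ≫ b = a := by
  have := hasLiftingProperty_of_wfs i _ hi hY
  have sq : CommSq a i (0 : Y ⟶ 0) 0 := ⟨by simp⟩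
  exact ⟨sq.lift, sq.fac_left⟩

omit [HasBinaryBiproducts 𝒜] in
theorem Cofibrant.exists_lift {A X Y : 𝒜} (hA : Cofibrant L A) {p : X ⟶ Y} (hp : R p)
    (b : A ⟶ Y) : ∃ a : A ⟶ X, a ≫ p = b := by
  have := hasLiftingProperty_of_wfs _ p hA hp
  have sq : CommSq 0 (0 : 0 ⟶ A) p b := ⟨by simp⟩
  exact ⟨sq.lift, sq.fac_right⟩

theorem left_of_conflation (hR : FibsAreDefl E R) {A B Z : 𝒜} {f : A ⟶ B} {d : B ⟶ Z}
    (hf : E.conflation f d) (hZ : ∀ K, Fibrant R K → Ext1IsZero E Z K) : L f := by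
  have := isStableUnderBaseChange_of_wfs L R
  rw [← llp_eq_of_wfs L R]
  intro X Y p hp
  obtain ⟨K, k, hk⟩ := hR p hp
  have hZK : Ext1IsZero E Z K := hZ K (.of_conflation hk hp)
  exact hZK.hasLiftingProperty hf hk

theorem right_of_conflation (hL : CofibsAreInfl E L) {K X Y : 𝒜} {k : K ⟶ X} {p : X ⟶ Y}
    (hp : E.conflation k p) (hK : ∀ Z, Cofibrant L Z → Ext1IsZero E Z K) : R p := by
  have := isStableUnderCobaseChange_of_wfs L R
  rw [← rlp_eq_of_wfs L R]
  intro A B f hf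
  obtain ⟨Z, d, hd⟩ := hL f hf
  have hZK : Ext1IsZero E Z K := hK Z (.of_conflation hd hf)
  exact hZK.hasLiftingProperty hd hp

variable (hext : ∀ A B : 𝒜, Cofibrant L A → Fibrant R B → Ext1IsZero E A B)

include hext in
theorem cofibsAreInflWithCofibCoker_of_ext1IsZero (hL : CofibsAreInfl E L)
    (hR : FibsAreDefl E R) : CofibsAreInflWithCofibCoker E L := fun f => by
  have := isStableUnderCobaseChange_of_wfs L R
  refine ⟨fun hf => ?_, fun ⟨Z, d, hd, hZ⟩ => left_of_conflation hR hd fun K => hext Z K hZ⟩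
  obtain ⟨Z, d, hd⟩ := hL f hf
  exact ⟨Z, d, hd, .of_conflation hd hf⟩

include hext in
theorem fibsAreDeflWithFibKer_of_ext1IsZero (hL : CofibsAreInfl E L)
    (hR : FibsAreDefl E R) : FibsAreDeflWithFibKer E R := fun p => by
  have := isStableUnderBaseChange_of_wfs L R
  refine ⟨fun hp => ?_, fun ⟨K, k, hk, hK⟩ => right_of_conflation hL hk fun Z hZ => hext Z K hZ hK⟩
  obtain ⟨K, k, hk⟩ := hR p hp
  exact ⟨K, k, hk, .of_conflation hk hp⟩

include hext in
theorem isCotorsionPair_of_ext1IsZero (hL : CofibsAreInfl E L) (hR : FibsAreDefl E R) :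
    IsCotorsionPair E {A | Cofibrant L A} {B | Fibrant R B} :=
  ⟨fun A => ⟨fun hA B => hext A B hA, left_of_conflation hR (E.id_deflation A)⟩,
    fun B => ⟨fun hB A hA => hext A B hA hB, right_of_conflation hL (E.conflation_id_zero B)⟩⟩

theorem CofibsAreInflWithCofibCoker.ext1IsZero (h : CofibsAreInflWithCofibCoker E L) {A B : 𝒜}
    (hA : Cofibrant L A) (hB : Fibrant R B) : Ext1IsZero E A B := fun i d hi =>
  hB.exists_extension ((h i).2 ⟨A, d, hi, hA⟩) (𝟙 B)

theorem FibsAreDeflWithFibKer.ext1IsZero (h : FibsAreDeflWithFibKer E R) {A B : 𝒜}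
    (hA : Cofibrant L A) (hB : Fibrant R B) : Ext1IsZero E A B := fun i d hi =>
  let ⟨_, hs⟩ := hA.exists_lift ((h d).2 ⟨B, i, hi, hB⟩) (𝟙 A)
  hi.exists_retraction_of_section hs

theorem isCompleteCP_of_isWeakFactorizationSystem (hL : CofibsAreInfl E L)
    (hR : FibsAreDefl E R) : IsCompleteCP E {A | Cofibrant L A} {B | Fibrant R B} := fun A => by
  have := isStableUnderBaseChange_of_wfs L R
  have := isStableUnderCobaseChange_of_wfs L R
  constructor
  · obtain ⟨X, j, p, -, hj, hp⟩ := factorizationData L R (0 : 0 ⟶ A)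
    obtain ⟨K, k, hk⟩ := hR p hp
    obtain rfl := (isZero_zero 𝒜).eq_of_src j 0
    exact ⟨K, X, k, p, hk, hj, .of_conflation hk hp⟩
  · obtain ⟨Y, j, p, -, hj, hp⟩ := factorizationData L R (0 : A ⟶ 0)
    obtain ⟨Z, d, hd⟩ := hL j hj
    obtain rfl := (isZero_zero 𝒜).eq_of_tgt p 0
    exact ⟨Y, Z, j, d, hd, .of_conflation hd hj, hp⟩

theorem IsCompleteCP.cofibsAreInfl (hE : IsWIC E)
    (h : IsCompleteCP E {A | Cofibrant L A} {B | Fibrant R B}) :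
    CofibsAreInfl E L := fun {A _} f hf => by
  obtain ⟨-, Y, Z, i, d, hi, -, hY⟩ := h A
  obtain ⟨b, rfl⟩ := Fibrant.exists_extension hY hf i
  exact .of_comp hE ⟨Z, d, hi⟩

theorem IsCompleteCP.fibsAreDefl (hE : IsWIC E)
    (h : IsCompleteCP E {A | Cofibrant L A} {B | Fibrant R B}) :
    FibsAreDefl E R := fun {_ B} p hp => by
  obtain ⟨⟨K, X, k, d, hd, hX, -⟩, -⟩ := h B
  obtain ⟨a, rfl⟩ := Cofibrant.exists_lift hX hp d
  exact .of_comp hE ⟨K, k, hd⟩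

end WeakFactorizationSystem

theorem stmt_17_general (E : ExactStructure 𝒜) (L R : MorphismProperty 𝒜)
    [MorphismProperty.IsWeakFactorizationSystem L R] :
    ((CofibsAreInflWithCofibCoker E L ∧ FibsAreDefl E R) ↔
      ((∀ A B : 𝒜, Cofibrant L A → Fibrant R B → Ext1IsZero E A B) ∧
        CofibsAreInfl E L ∧ FibsAreDefl E R)) ∧
    ((CofibsAreInflWithCofibCoker E L ∧ FibsAreDefl E R) ↔
      (FibsAreDeflWithFibKer E R ∧ CofibsAreInfl E L)) ∧
    ((CofibsAreInflWithCofibCoker E L ∧ FibsAreDefl E R) ↔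
      (CofibsAreInflWithCofibCoker E L ∧ FibsAreDeflWithFibKer E R)) ∧
    (IsWIC E →
      ((CofibsAreInflWithCofibCoker E L ∧ FibsAreDefl E R) ↔
        (IsCotorsionPair E {A | Cofibrant L A} {B | Fibrant R B} ∧
          IsCompleteCP E {A | Cofibrant L A} {B | Fibrant R B}))) := by
  have h12 : (CofibsAreInflWithCofibCoker E L ∧ FibsAreDefl E R) ↔
      ((∀ A B : 𝒜, Cofibrant L A → Fibrant R B → Ext1IsZero E A B) ∧
        CofibsAreInfl E L ∧ FibsAreDefl E R) :=
    ⟨fun ⟨hL, hR⟩ => ⟨fun _ _ => hL.ext1IsZero, hL.cofibsAreInfl, hR⟩,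
      fun ⟨hext, hL, hR⟩ => ⟨cofibsAreInflWithCofibCoker_of_ext1IsZero hext hL hR, hR⟩⟩
  have h13 (h1 : CofibsAreInflWithCofibCoker E L ∧ FibsAreDefl E R) : FibsAreDeflWithFibKer E R :=
    let ⟨hext, hL, hR⟩ := h12.1 h1
    fibsAreDeflWithFibKer_of_ext1IsZero hext hL hR
  refine ⟨h12, ⟨fun h1 => ⟨h13 h1, (h12.1 h1).2.1⟩, fun ⟨hR, hL⟩ => ?_⟩,
    ⟨fun h1 => ⟨h1.1, h13 h1⟩, fun ⟨hL, hR⟩ => ⟨hL, hR.fibsAreDefl⟩⟩,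
    fun hE => ⟨fun h1 => ?_, fun ⟨hpair, hcomplete⟩ => ?_⟩⟩
  · exact h12.2 ⟨fun _ _ => hR.ext1IsZero, hL, hR.fibsAreDefl⟩
  · obtain ⟨hext, hL, hR⟩ := h12.1 h1
    exact ⟨isCotorsionPair_of_ext1IsZero hext hL hR,
      isCompleteCP_of_isWeakFactorizationSystem hL hR⟩
  · exact h12.2 ⟨fun A B hA hB => (hpair.1 A).1 hA B hB, hcomplete.cofibsAreInfl hE,
      hcomplete.fibsAreDefl hE⟩

section ModelStructure

variable {C F W : MorphismProperty 𝒜}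

omit [Preadditive 𝒜] [HasZeroObject 𝒜] [HasBinaryBiproducts 𝒜] in
theorem isRetractMor_of_retractArrow {A B X Y : 𝒜} {g : A ⟶ B} {f : X ⟶ Y}
    (h : RetractArrow g f) : IsRetractMor g f :=
  ⟨h.i.left, h.r.left, h.i.right, h.r.right, h.retract_left, h.retract_right, h.i_w, h.r_w.symm⟩

namespace IsModelStructure

section

omit [Preadditive 𝒜] [HasZeroObject 𝒜] [HasBinaryBiproducts 𝒜]

theorem weq_id (h : IsModelStructure C F W) (A : 𝒜) : W (𝟙 A) := by
  obtain ⟨Z, i, p, hip, -, hi, -⟩ := h.fact_left (𝟙 A)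
  exact h.retract_weq _ i ⟨𝟙 A, 𝟙 A, i, p, by simp, hip, by simp, by simp [hip]⟩ hi

theorem isWeakFactorizationSystem (h : IsModelStructure C F W) :
    MorphismProperty.IsWeakFactorizationSystem C (F ⊓ W) :=
  have : C.IsStableUnderRetracts :=
    ⟨fun hr hf => h.retract_cofib _ _ (isRetractMor_of_retractArrow hr) hf⟩
  have : (F ⊓ W).IsStableUnderRetracts :=
    ⟨fun hr hf => ⟨h.retract_fib _ _ (isRetractMor_of_retractArrow hr) hf.1,
      h.retract_weq _ _ (isRetractMor_of_retractArrow hr) hf.2⟩⟩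
  have : C.HasFactorization (F ⊓ W) :=
    ⟨fun f => let ⟨Z, j, q, hjq, hj, hq⟩ := h.fact_right f
      ⟨{ Z := Z, i := j, p := q, fac := hjq, hi := hj, hp := hq }⟩⟩
  .mk' _ _ fun i p hi hp => ⟨fun {a b} sq =>
    let ⟨s, hs, hs'⟩ := h.lifting_right i p a b hi hp.1 hp.2 sq.w
    ⟨⟨⟨s, hs, hs'⟩⟩⟩⟩

end

omit [HasBinaryBiproducts 𝒜] in
theorem trivialObj_iff (h : IsModelStructure C F W) (Y : 𝒜) :
    TrivialObj W Y ↔ W (0 : Y ⟶ 0) := by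
  have hW : W ((0 : (0 : 𝒜) ⟶ Y) ≫ (0 : Y ⟶ 0)) := by
    simpa [id_zero] using h.weq_id 0
  exact ⟨fun hY => h.weq_cancel_left _ _ hY hW, fun hY => h.weq_cancel_right _ _ hY hW⟩

omit [HasBinaryBiproducts 𝒜] in
theorem fibrant_inf_iff (h : IsModelStructure C F W) (B : 𝒜) :
    Fibrant (F ⊓ W) B ↔ Fibrant F B ∧ TrivialObj W B :=
  and_congr_right fun _ => (h.trivialObj_iff B).symm

theorem fibsAreDeflWithFibKer_inf_iff (h : IsModelStructure C F W) (E : ExactStructure 𝒜) :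
    FibsAreDeflWithFibKer E (F ⊓ W) ↔ TrivFibsAreDeflWithTrivFibKer E F W := by
  simp only [FibsAreDeflWithFibKer, TrivFibsAreDeflWithTrivFibKer, h.fibrant_inf_iff]
  rfl

end IsModelStructure

theorem fibsAreDefl_inf_iff (E : ExactStructure 𝒜) :
    FibsAreDefl E (F ⊓ W) ↔ TrivFibsAreDefl E F W :=
  ⟨fun h _ _ f hF hW => h f ⟨hF, hW⟩, fun h _ _ f hf => h f hf.1 hf.2⟩

end ModelStructure

/-- Characterizations of weak projectivity of a model structure. -/
theorem stmt_17 (E : ExactStructure 𝒜) (C F W : MorphismProperty 𝒜)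
    (hms : IsModelStructure C F W) :
    ((CofibsAreInflWithCofibCoker E C ∧ TrivFibsAreDefl E F W) ↔
      ((∀ A B : 𝒜, Cofibrant C A → (Fibrant F B ∧ TrivialObj W B) → Ext1IsZero E A B) ∧
        CofibsAreInfl E C ∧ TrivFibsAreDefl E F W)) ∧
    ((CofibsAreInflWithCofibCoker E C ∧ TrivFibsAreDefl E F W) ↔
      (TrivFibsAreDeflWithTrivFibKer E F W ∧ CofibsAreInfl E C)) ∧
    ((CofibsAreInflWithCofibCoker E C ∧ TrivFibsAreDefl E F W) ↔
      (CofibsAreInflWithCofibCoker E C ∧ TrivFibsAreDeflWithTrivFibKer E F W)) ∧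
    (IsWIC E →
      ((CofibsAreInflWithCofibCoker E C ∧ TrivFibsAreDefl E F W) ↔
        (IsCotorsionPair E {A : 𝒜 | Cofibrant C A}
            {B : 𝒜 | Fibrant F B ∧ TrivialObj W B} ∧
         IsCompleteCP E {A : 𝒜 | Cofibrant C A}
            {B : 𝒜 | Fibrant F B ∧ TrivialObj W B}))) := by
  have := hms.isWeakFactorizationSystem
  simpa only [hms.fibrant_inf_iff, hms.fibsAreDeflWithFibKer_inf_iff, fibsAreDefl_inf_iff] using
    stmt_17_general E C (F ⊓ W)
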